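/- arXiv:2205.14478 — 4 statements merged into one kernel-verified Lean document; each statement's English description precedes it below -/
import Mathlib

section
/- Let C be a nonempty finite set, N a positive integer, T ≤ N a threshold, B ⊆ C, and x ∈ C. If h is chosen uniformly at random from the set of all functions C → {1,…,N}, then the probability that h(x) ≤ T and there exists x' ∈ B \ {x} with h(x') = h(x) equals (T/N)·(1 − (1 − 1/N)^{|B \ {x}|}). -/
open scoped Classical

/-!
The coordinates of a uniformly random function are independent, so conditionally on `h x = v` the
points of `I = B \ {x}` all avoid `v` with probability `(1 - 1 / N) ^ |I|`, whatever `v` is.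
Averaging over the `T` admissible values of `v` and passing to the complementary event gives the
formula.
-/

open Finset

theorem nnratCast_dens_compl {α 𝕜 : Type*} [Fintype α] [DecidableEq α] [Nonempty α] [DivisionRing 𝕜]
    [CharZero 𝕜] (s : Finset α) : (sᶜ.dens : 𝕜) = 1 - s.dens := by
  rw [eq_sub_iff_add_eq, ← NNRat.cast_add, ← dens_union_of_disjoint disjoint_compl_left,
    union_comm, union_compl, dens_univ, NNRat.cast_one]

section Pi

variable {ι : Type*} [Fintype ι] [DecidableEq ι] {π : ι → Type*} [∀ i, Fintype (π i)]

theorem dens_piFinset (s : ∀ i, Finset (π i)) :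
    (Fintype.piFinset s).dens = ∏ i, (s i).dens := by
  simp_rw [dens, Fintype.card_piFinset, Fintype.card_pi, Nat.cast_prod, prod_div_distrib]

theorem dens_filter_forall_apply_mem [∀ i, Nonempty (π i)] [∀ i, DecidableEq (π i)]
    (I : Finset ι) (s : ∀ i, Finset (π i)) :
    dens {h : ∀ i, π i | ∀ i ∈ I, h i ∈ s i} = ∏ i ∈ I, (s i).dens := by
  have cylinder : ({h : ∀ i, π i | ∀ i ∈ I, h i ∈ s i} : Finset _) =
      Fintype.piFinset fun i => if i ∈ I then s i else univ := by
    ext h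
    simp only [mem_filter_univ, Fintype.mem_piFinset]
    refine forall_congr' fun i => ?_
    split_ifs with hi <;> simp [hi]
  simp_rw [cylinder, dens_piFinset, apply_ite dens, dens_univ, Fintype.prod_ite_mem]

end Pi

section Function

variable {ι β : Type*} [Fintype ι] [DecidableEq ι] [Fintype β] [DecidableEq β]
  {𝕜 : Type*} [Field 𝕜] [CharZero 𝕜] {I : Finset ι} {x : ι}

theorem dens_filter_apply_mem [Nonempty β] (x : ι) (A : Finset β) :
    dens {h : ι → β | h x ∈ A} = A.dens := by
  simpa using dens_filter_forall_apply_mem {x} fun _ => A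

theorem dens_filter_apply_eq_and_forall_apply_ne (hx : x ∉ I) (v : β) :
    dens {h : ι → β | h x = v ∧ ∀ c ∈ I, h c ≠ v} =
      (Fintype.card β : ℚ≥0)⁻¹ * ({v}ᶜ : Finset β).dens ^ #I := by
  have : Nonempty β := ⟨v⟩
  have ne_x : ∀ c ∈ I, c ≠ x := fun c hc => ne_of_mem_of_not_mem hc hx
  have independence := dens_filter_forall_apply_mem (insert x I)
    (fun c => if c = x then ({v} : Finset β) else {v}ᶜ)
  rw [prod_insert hx, prod_congr rfl fun c hc => by rw [if_neg (ne_x c hc)]] at independence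
  simpa +contextual [forall_mem_insert, ne_x] using independence

theorem dens_filter_apply_mem_and_forall_apply_ne (hx : x ∉ I) (A : Finset β) :
    (dens {h : ι → β | h x ∈ A ∧ ∀ c ∈ I, h c ≠ h x} : 𝕜) =
      A.dens * (1 - 1 / (Fintype.card β : 𝕜)) ^ #I := by
  have maps_to_A : Set.MapsTo (fun h : ι → β => h x)
      ({h : ι → β | h x ∈ A ∧ ∀ c ∈ I, h c ≠ h x} : Finset _) A := fun h hh =>
    ((mem_filter_univ h).mp hh).1
  have fiber_dens : ∀ v ∈ A,
      (dens {h ∈ ({h : ι → β | h x ∈ A ∧ ∀ c ∈ I, h c ≠ h x} : Finset _) | h x = v} : 𝕜) =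
        (Fintype.card β : 𝕜)⁻¹ * (1 - 1 / (Fintype.card β : 𝕜)) ^ #I := by
    intro v hv
    have : Nonempty β := ⟨v⟩
    have fiber_eq : {h ∈ ({h : ι → β | h x ∈ A ∧ ∀ c ∈ I, h c ≠ h x} : Finset _) | h x = v} =
        ({h : ι → β | h x = v ∧ ∀ c ∈ I, h c ≠ v} : Finset _) := by
      grind
    rw [fiber_eq, dens_filter_apply_eq_and_forall_apply_ne hx]
    simp only [NNRat.cast_mul, NNRat.cast_pow, NNRat.cast_inv, NNRat.cast_natCast,
      nnratCast_dens_compl, dens_singleton, one_div]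
  rw [dens_eq_sum_dens_fiberwise maps_to_A, NNRat.cast_sum, sum_congr rfl fiber_dens, sum_const,
    nsmul_eq_mul, nnratCast_dens, div_mul_eq_mul_div, mul_div_assoc, inv_mul_eq_div]

theorem stmt4_general [Nonempty β] (A : Finset β) (hx : x ∉ I) :
    (dens {h : ι → β | h x ∈ A ∧ ∃ c ∈ I, h c = h x} : 𝕜) =
      A.dens * (1 - (1 - 1 / (Fintype.card β : 𝕜)) ^ #I) := by
  have split : dens {h : ι → β | h x ∈ A ∧ ∃ c ∈ I, h c = h x} +
      dens {h : ι → β | h x ∈ A ∧ ∀ c ∈ I, h c ≠ h x} = A.dens := by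
    have total := dens_filter_add_dens_filter_not_eq_dens (s := {h : ι → β | h x ∈ A})
      fun h => ∃ c ∈ I, h c = h x
    simpa only [filter_filter, not_exists, not_and, dens_filter_apply_mem] using total
  rw [mul_one_sub, ← dens_filter_apply_mem_and_forall_apply_ne hx, ← split, NNRat.cast_add,
    add_sub_cancel_right]

end Function

/-- For a uniformly random function `h : C → {1,…,N}` (encoded as `h : C → Fin N`, the
value `(h c : ℕ) + 1` ranging over `{1,…,N}`), the probability that `h(x) ≤ T` and some
`x' ∈ B \ {x}` satisfies `h(x') = h(x)` equals `(T/N)·(1 − (1 − 1/N)^{|B \ {x}|})`. -/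
theorem stmt4 {C : Type*} [Fintype C] [DecidableEq C] [Nonempty C]
    (N T : ℕ) (hN : 0 < N) (hTN : T ≤ N) (B : Finset C) (x : C) :
    ((Finset.univ.filter fun h : C → Fin N =>
        (h x : ℕ) < T ∧ ∃ x' ∈ B.erase x, h x' = h x).card : ℝ)
      / ((N : ℝ) ^ Fintype.card C)
      = ((T : ℝ) / N) * (1 - (1 - 1 / (N : ℝ)) ^ (B.erase x).card) := by
  have : Nonempty (Fin N) := Fin.pos_iff_nonempty.mp hN
  simpa [nnratCast_dens, Fin.card_filter_val_lt, hTN, -mem_erase, -card_erase_of_mem] using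
    stmt4_general (𝕜 := ℝ) ({v | (v : ℕ) < T} : Finset (Fin N)) (notMem_erase x B)
end

section
/- Let C be a finite set, let α, β, ν ∈ (0,1) with α ≤ β, and let N, T be positive integers with T ≤ N and T ≥ max(3·β⁻²·α⁻¹·ln(8/ν), 45·α⁻¹·β⁻¹·ln(12/ν)). Then for every pair of subsets A, B ⊆ C with |A| ≤ βN and |B| ≤ βN, a uniformly random function h : C → {1,…,N} is (A,B)-good with probability at least 1 − ν/2. -/
open scoped Classical

/-- `A|_h^{≤T}` for a hash function `h : C → {1,…,N}` encoded as `h : C → Fin N`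
(the value `(h c : ℕ) + 1` ranges over `{1,…,N}`, and lands in `{1,…,T}` iff
`(h c : ℕ) < T`). -/
def lowF {C : Type*} [DecidableEq C] {N : ℕ} (T : ℕ) (A : Finset C) (h : C → Fin N) :
    Finset C :=
  A.filter fun c => (h c : ℕ) < T

/-- `Coll^{≤T}(A,h,B)`: elements of `A` hashing to a value in `{1,…,T}` that collide with
a distinct element of `B`. -/
def collF {C : Type*} [DecidableEq C] {N : ℕ} (T : ℕ) (A B : Finset C) (h : C → Fin N) :
    Finset C :=
  A.filter fun c => (h c : ℕ) < T ∧ ∃ b ∈ B.erase c, h b = h c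

/-- `h` is `(A,B)`-good for parameters `a = α`, `b = β` and threshold `T`. -/
def IsGood {C : Type*} [DecidableEq C] {N : ℕ} (a b : ℝ) (T : ℕ) (A B : Finset C)
    (h : C → Fin N) : Prop :=
  (a * N ≤ (A.card : ℝ) →
    ((1 - b) * T * A.card / N ≤ ((lowF T A h).card : ℝ) ∧
      ((lowF T A h).card : ℝ) ≤ (1 + b) * T * A.card / N) ∧
    ((collF T A B h).card : ℝ) ≤ 2 * b * T * A.card / N) ∧
  ((A.card : ℝ) < a * N →
    ((lowF T A h).card : ℝ) ≤ (1 + b) * T * a ∧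
    ((collF T A B h).card : ℝ) ≤ 2 * T * a * b)

/-!
Rank the elements of `C` and let `f c h` depend only on the hash values of `c` and of elements
ranked below it. Then the mean of `∏ c, f c` is at most the product of bounds on the conditional
means of the factors, as for independent ones. For exponential factors this gives Chernoff bounds,
first for the number of elements of `A` hashing to at most `T`. For collisions, condition on the set
of elements hashing to at most `T`: their hash values are then independent and uniform on `T`
points. An element of `A` collides with an element of `B` ranked below or above it; each kind is
adapted to the ranking or to its reverse, and the Cauchy–Schwarz inequality combines the two. With
`M = max (T|A|/N) (Ta)`, usually at most `(5/4) M` elements of `A` and `(5/4) b T` of `B` hash to at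
most `T`, so the expected number of collisions is at most `(25/16) b M`, below the allowed `2 b M`.
-/

section

open Finset Real
open Fintype (piFinset)
open scoped BigOperators

section Tail

variable {Ω : Type*}

lemma card_filter_le_mul_exp_sub_of_expect_exp_le (s : Finset Ω) (X : Ω → ℝ) {x E : ℝ}
    (hX : 𝔼 ω ∈ s, exp (X ω) ≤ exp E) :
    (#{ω ∈ s | x ≤ X ω} : ℝ) ≤ #s * exp (E - x) := by
  have markov : (#{ω ∈ s | x ≤ X ω} : ℝ) * exp x ≤ #s * exp E := calc
    (#{ω ∈ s | x ≤ X ω} : ℝ) * exp x ≤ ∑ ω ∈ s with x ≤ X ω, exp (X ω) := by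
        rw [← nsmul_eq_mul]
        exact card_nsmul_le_sum _ _ _ fun ω hω => exp_le_exp.2 (mem_filter.1 hω).2
    _ ≤ ∑ ω ∈ s, exp (X ω) :=
        sum_le_sum_of_subset_of_nonneg (filter_subset _ _) fun _ _ _ => (exp_pos _).le
    _ = #s * 𝔼 ω ∈ s, exp (X ω) := (card_mul_expect _ _).symm
    _ ≤ #s * exp E := by gcongr
  rwa [exp_sub, ← mul_div_assoc, le_div_iff₀ (exp_pos _)]

lemma card_upper_tail_le_of_expect_exp_le (s : Finset Ω) (X : Ω → ℝ) {d μ : ℝ} (hd : 0 ≤ d)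
    (hμ : 0 ≤ μ) (hX : 𝔼 ω ∈ s, exp (log (1 + d) * X ω) ≤ exp (d * μ)) :
    (#{ω ∈ s | (1 + d) * μ ≤ X ω} : ℝ) ≤ #s * exp (-(μ * (d ^ 2 / (2 + d)))) := by
  have hlog : 2 * d / (d + 2) ≤ log (1 + d) := le_log_one_add_of_nonneg hd
  calc (#{ω ∈ s | (1 + d) * μ ≤ X ω} : ℝ)
      ≤ #{ω ∈ s | log (1 + d) * ((1 + d) * μ) ≤ log (1 + d) * X ω} := by
        have : 0 ≤ log (1 + d) := log_nonneg (by linarith)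
        exact mod_cast card_le_card <| monotone_filter_right s fun ω _ h =>
          mul_le_mul_of_nonneg_left h this
    _ ≤ #s * exp (d * μ - log (1 + d) * ((1 + d) * μ)) :=
        card_filter_le_mul_exp_sub_of_expect_exp_le s _ hX
    _ ≤ #s * exp (d * μ - 2 * d / (d + 2) * ((1 + d) * μ)) := by gcongr
    _ = #s * exp (-(μ * (d ^ 2 / (2 + d)))) := by
        congr 2
        field_simp
        ring

lemma exp_neg_le_div_of_log_div_le {k ν x : ℝ} (hk : 0 < k) (hν : 0 < ν) (hx : log (k / ν) ≤ x) :
    exp (-x) ≤ ν / k := by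
  rw [← inv_div, ← exp_log (div_pos hk hν), ← exp_neg]
  gcongr

lemma exp_neg_le_one_sub_add_sq_div_two {x : ℝ} (hx : 0 ≤ x) : exp (-x) ≤ 1 - x + x ^ 2 / 2 := by
  have hpos : 0 < 1 - x + x ^ 2 / 2 := by nlinarith [sq_nonneg (x - 1)]
  rw [exp_neg, inv_le_iff_one_le_mul₀ (exp_pos x)]
  calc 1 ≤ (1 - x + x ^ 2 / 2) * (1 + x + x ^ 2 / 2) := by nlinarith [sq_nonneg (x ^ 2)]
    _ ≤ (1 - x + x ^ 2 / 2) * exp x := by gcongr; exact quadratic_le_exp_of_nonneg hx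

lemma card_lower_tail_le_of_expect_exp_le (s : Finset Ω) (X : Ω → ℝ) {d μ : ℝ} (hd : 0 ≤ d)
    (hμ : 0 ≤ μ) (hX : 𝔼 ω ∈ s, exp (-d * X ω) ≤ exp ((exp (-d) - 1) * μ)) :
    (#{ω ∈ s | X ω ≤ (1 - d) * μ} : ℝ) ≤ #s * exp (-(μ * (d ^ 2 / 2))) := by
  calc (#{ω ∈ s | X ω ≤ (1 - d) * μ} : ℝ)
      ≤ #{ω ∈ s | -d * ((1 - d) * μ) ≤ -d * X ω} := by
        exact mod_cast card_le_card <| monotone_filter_right s fun ω _ h =>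
          mul_le_mul_of_nonpos_left h (neg_nonpos.2 hd)
    _ ≤ #s * exp ((exp (-d) - 1) * μ - -d * ((1 - d) * μ)) :=
        card_filter_le_mul_exp_sub_of_expect_exp_le s _ hX
    _ ≤ #s * exp ((1 - d + d ^ 2 / 2 - 1) * μ - -d * ((1 - d) * μ)) := by
        gcongr
        exact exp_neg_le_one_sub_add_sq_div_two hd
    _ = #s * exp (-(μ * (d ^ 2 / 2))) := by ring_nf

lemma card_filter_le_of_forall_fiber {κ : Type*} [DecidableEq κ] (s : Finset Ω)
    (g : Ω → κ) (P : Ω → Prop) [DecidablePred P] {ε : ℝ}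
    (hP : ∀ k, (#{ω ∈ s | g ω = k ∧ P ω} : ℝ) ≤ #{ω ∈ s | g ω = k} * ε) :
    (#{ω ∈ s | P ω} : ℝ) ≤ #s * ε := by
  have total (t : Finset Ω) (hts : t ⊆ s) :
      (#t : ℝ) = ∑ k ∈ s.image g, (#{ω ∈ t | g ω = k} : ℝ) := by
    rw [card_eq_sum_card_fiberwise fun ω hω => mem_coe.2 (mem_image_of_mem g (hts hω)),
      Nat.cast_sum]
  rw [total s subset_rfl, total {ω ∈ s | P ω} (filter_subset _ _), sum_mul]
  refine sum_le_sum fun k _ => ?_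
  simpa only [filter_filter, and_comm] using hP k

lemma one_sub_le_card_filter_div_card [Fintype Ω] [Nonempty Ω] (P : Ω → Prop) [DecidablePred P]
    {ε : ℝ} (hP : (#{ω | ¬P ω} : ℝ) ≤ Fintype.card Ω * ε) :
    1 - ε ≤ (#{ω | P ω} : ℝ) / Fintype.card Ω := by
  have hcard : (#{ω | P ω} : ℝ) + #{ω | ¬P ω} = Fintype.card Ω :=
    mod_cast card_filter_add_card_filter_not (s := univ) P
  rw [le_div_iff₀ (mod_cast Fintype.card_pos)]
  linarith

end Tail

section Product

variable {C V ι : Type*} [Fintype C] [DecidableEq C]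

lemma expect_piFinset_update (W : C → Finset V) (c : C) (F : (C → V) → ℝ) :
    𝔼 h ∈ piFinset W, 𝔼 v ∈ W c, F (Function.update h c v) = 𝔼 h ∈ piFinset W, F h := by
  have swap_mem : ∀ p ∈ piFinset W ×ˢ W c,
      (Function.update p.1 c p.2, p.1 c) ∈ piFinset W ×ˢ W c := by
    simp only [mem_product, Fintype.mem_piFinset]
    rintro ⟨h, v⟩ ⟨hh, hv⟩
    refine ⟨fun x => ?_, hh c⟩
    obtain rfl | hx := eq_or_ne x c
    · simpa only [Function.update_self] using hv
    · simpa only [Function.update_of_ne hx] using hh x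
  calc 𝔼 h ∈ piFinset W, 𝔼 v ∈ W c, F (Function.update h c v)
      = 𝔼 p ∈ piFinset W ×ˢ W c, F p.1 := by
        rw [← expect_product']
        exact expect_nbij' (fun p => (Function.update p.1 c p.2, p.1 c))
          (fun p => (Function.update p.1 c p.2, p.1 c)) swap_mem swap_mem
          (by simp) (by simp) (by simp)
    _ = 𝔼 h ∈ piFinset W, F h := by
        rw [expect_product]
        exact expect_congr rfl fun h hh =>
          expect_const ⟨h c, Fintype.mem_piFinset.1 hh c⟩ (F h)

-- Averaging first over the hash value of the element of largest rank affects only its own factor.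
theorem expect_prod_le_prod_of_adapted [LinearOrder ι] (W : C → Finset V) (r : C → ι)
    (f : C → (C → V) → ℝ) (K : C → ℝ) (s : Finset C) (hf : ∀ c h, 0 ≤ f c h)
    (hK : ∀ c ∈ s, 0 ≤ K c)
    (hadapted : ∀ c a, c ≠ a → r c ≤ r a → ∀ h v, f c (Function.update h a v) = f c h)
    (hfK : ∀ c ∈ s, ∀ h, 𝔼 v ∈ W c, f c (Function.update h c v) ≤ K c) :
    𝔼 h ∈ piFinset W, ∏ c ∈ s, f c h ≤ ∏ c ∈ s, K c := by
  induction s using Finset.induction_on_max_value r with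
  | empty =>
    simp only [prod_empty]
    obtain hW | hW := (piFinset W).eq_empty_or_nonempty
    · simp [hW]
    · exact (expect_const hW 1).le
  | insert a s ha hmax ih =>
    specialize ih (fun c hc => hK c (mem_insert_of_mem hc))
      (fun c hc => hfK c (mem_insert_of_mem hc))
    have prod_update (h : C → V) (v : V) :
        ∏ c ∈ s, f c (Function.update h a v) = ∏ c ∈ s, f c h :=
      prod_congr rfl fun c hc => hadapted c a (ne_of_mem_of_not_mem hc ha) (hmax c hc) h v
    calc 𝔼 h ∈ piFinset W, ∏ c ∈ insert a s, f c h
        = 𝔼 h ∈ piFinset W, (𝔼 v ∈ W a, f a (Function.update h a v)) * ∏ c ∈ s, f c h := by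
          rw [← expect_piFinset_update W a]
          simp only [prod_insert ha, prod_update, expect_mul]
      _ ≤ 𝔼 h ∈ piFinset W, K a * ∏ c ∈ s, f c h := by
          refine expect_le_expect fun h _ => ?_
          exact mul_le_mul_of_nonneg_right (hfK a (mem_insert_self a s) h)
            (prod_nonneg fun c _ => hf c h)
      _ = K a * 𝔼 h ∈ piFinset W, ∏ c ∈ s, f c h := (mul_expect _ _ _).symm
      _ ≤ K a * ∏ c ∈ s, K c := mul_le_mul_of_nonneg_left ih (hK a (mem_insert_self a s))
      _ = ∏ c ∈ insert a s, K c := (prod_insert ha).symm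

end Product

lemma exp_mul_card_filter {α : Type*} (s : Finset α) (P : α → Prop) [DecidablePred P] (θ : ℝ) :
    exp (θ * #{x ∈ s | P x}) = ∏ x ∈ s, if P x then exp θ else 1 := by
  rw [prod_ite, prod_const, prod_const_one, mul_one, ← exp_nat_mul, mul_comm]

lemma expect_ite_exp_le {α : Type*} (s : Finset α) (P : α → Prop) [DecidablePred P] (θ : ℝ) :
    𝔼 x ∈ s, (if P x then exp θ else 1) ≤ exp ((exp θ - 1) * (#{x ∈ s | P x} / #s)) := by
  obtain rfl | hs := s.eq_empty_or_nonempty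
  · simp
  have hite (x : α) : (if P x then exp θ else 1) = 1 + (exp θ - 1) * if P x then 1 else 0 := by
    split_ifs <;> ring
  calc 𝔼 x ∈ s, (if P x then exp θ else 1) = (exp θ - 1) * (#{x ∈ s | P x} / #s) + 1 := by
        simp only [hite, expect_add_distrib, ← mul_expect, expect_const hs,
          expect_eq_sum_div_card _ (fun x => if P x then (1 : ℝ) else 0), sum_boole]
        ring
    _ ≤ exp ((exp θ - 1) * (#{x ∈ s | P x} / #s)) := add_one_le_exp _

section Hits

variable {C V : Type*} [Fintype C] [DecidableEq C] [Fintype V] [DecidableEq V]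

theorem expect_exp_mul_card_hits_le (L : Finset V) (A : Finset C) (θ : ℝ) :
    𝔼 h : C → V, exp (θ * #{c ∈ A | h c ∈ L})
      ≤ exp ((exp θ - 1) * (#L * #A / Fintype.card V)) := by
  have hstep := expect_prod_le_prod_of_adapted (fun _ => univ) (fun _ : C => 0)
    (fun c (h : C → V) => if h c ∈ L then exp θ else 1)
    (fun _ => exp ((exp θ - 1) * (#L / Fintype.card V))) A
    (fun c h => by positivity) (fun _ _ => by positivity)
    (fun c a hca _ h v => by rw [Function.update_of_ne hca])
    (fun c _ h => by simpa using expect_ite_exp_le univ (· ∈ L) θ)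
  calc 𝔼 h : C → V, exp (θ * #{c ∈ A | h c ∈ L})
      ≤ ∏ _c ∈ A, exp ((exp θ - 1) * (#L / Fintype.card V)) := by
        simpa only [exp_mul_card_filter, Fintype.piFinset_univ] using hstep
    _ = exp ((exp θ - 1) * (#L * #A / Fintype.card V)) := by
        rw [prod_const, ← exp_nat_mul]
        ring_nf

theorem card_hits_upper_tail_le (L : Finset V) (A : Finset C) {d μ : ℝ} (hd : 0 ≤ d)
    (hμ : (#L * #A / Fintype.card V : ℝ) ≤ μ) :
    (#{h : C → V | (1 + d) * μ ≤ #{c ∈ A | h c ∈ L}} : ℝ)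
      ≤ Fintype.card (C → V) * exp (-(μ * (d ^ 2 / (2 + d)))) := by
  refine card_upper_tail_le_of_expect_exp_le univ _ hd (le_trans (by positivity) hμ) ?_
  refine (expect_exp_mul_card_hits_le L A _).trans ?_
  rw [exp_log (by linarith), add_sub_cancel_left]
  gcongr

theorem card_hits_lower_tail_le (L : Finset V) (A : Finset C) {d : ℝ} (hd : 0 ≤ d) :
    (#{h : C → V | #{c ∈ A | h c ∈ L} ≤ (1 - d) * (#L * #A / Fintype.card V : ℝ)} : ℝ)
      ≤ Fintype.card (C → V) * exp (-(#L * #A / Fintype.card V * (d ^ 2 / 2))) :=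
  card_lower_tail_le_of_expect_exp_le univ _ hd (by positivity)
    (expect_exp_mul_card_hits_le L A _)

end Hits

section Collisions

lemma sum_card_lt_add_sum_card_gt_le {C ι : Type*} [LinearOrder ι] (r : C → ι)
    (A B : Finset C) :
    ∑ c ∈ A, (#{b ∈ B | r b < r c} : ℝ) +
        ∑ c ∈ A, (#{b ∈ B | OrderDual.toDual (r b) < OrderDual.toDual (r c)} : ℝ)
      ≤ #A * #B := by
  rw [← sum_add_distrib, ← nsmul_eq_mul]
  refine sum_le_card_nsmul _ _ _ fun c _ => ?_
  have hdisj : Disjoint {b ∈ B | r b < r c}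
      {b ∈ B | OrderDual.toDual (r b) < OrderDual.toDual (r c)} :=
    disjoint_filter.2 fun b _ hlt hgt => lt_asymm hlt (OrderDual.toDual_lt_toDual.1 hgt)
  rw [← Nat.cast_add, ← card_union_of_disjoint hdisj]
  exact mod_cast card_le_card (union_subset (filter_subset _ _) (filter_subset _ _))

variable {C V : Type*} [DecidableEq C] [DecidableEq V]

lemma card_filter_update_mem_image_le {ι : Type*} [LinearOrder ι] (r : C → ι) (B : Finset C)
    (s : Finset V) (c : C) (h : C → V) :
    #{v ∈ s | ∃ b ∈ B, r b < r c ∧ Function.update h c v b = Function.update h c v c}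
      ≤ #{b ∈ B | r b < r c} := by
  refine (card_le_card fun v hv => ?_).trans (card_image_le (f := h))
  obtain ⟨-, b, hbB, hbc, hbv⟩ := mem_filter.1 hv
  have hne : b ≠ c := fun e => hbc.ne (congrArg r e)
  rw [Function.update_of_ne hne, Function.update_self] at hbv
  exact mem_image.2 ⟨b, mem_filter.2 ⟨hbB, hbc⟩, hbv⟩

lemma card_collisions_le_add_card_early_collisions {ι : Type*} [LinearOrder ι] {r : C → ι}
    (hr : Function.Injective r) (A B : Finset C) (h : C → V) :
    #{c ∈ A | ∃ b ∈ B.erase c, h b = h c}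
      ≤ #{c ∈ A | ∃ b ∈ B, r b < r c ∧ h b = h c} +
        #{c ∈ A | ∃ b ∈ B, OrderDual.toDual (r b) < OrderDual.toDual (r c) ∧ h b = h c} := by
  refine (card_le_card fun c hc => ?_).trans (card_union_le _ _)
  obtain ⟨hcA, b, hb, hbc⟩ := mem_filter.1 hc
  obtain ⟨hne, hbB⟩ := mem_erase.1 hb
  rw [mem_union, mem_filter, mem_filter]
  exact (lt_or_gt_of_ne (hr.ne hne)).imp (fun hlt => ⟨hcA, b, hbB, hlt, hbc⟩)
    (fun hlt => ⟨hcA, b, hbB, hlt, hbc⟩)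

variable [Fintype C]

theorem expect_exp_mul_card_early_collisions_le {ι : Type*} [LinearOrder ι] (W : C → Finset V)
    (r : C → ι) (A B : Finset C) {T : ℕ} (hT : 0 < T) (hW : ∀ c ∈ A, T ≤ #(W c))
    {θ : ℝ} (hθ : 0 ≤ θ) :
    𝔼 h ∈ piFinset W, exp (θ * #{c ∈ A | ∃ b ∈ B, r b < r c ∧ h b = h c})
      ≤ exp ((exp θ - 1) * ((∑ c ∈ A, (#{b ∈ B | r b < r c} : ℝ)) / T)) := by
  have hexp : 0 ≤ exp θ - 1 := sub_nonneg.2 (one_le_exp hθ)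
  have hstep := expect_prod_le_prod_of_adapted W r
    (fun c h => if ∃ b ∈ B, r b < r c ∧ h b = h c then exp θ else 1)
    (fun c => exp ((exp θ - 1) * (#{b ∈ B | r b < r c} / T))) A
    (fun c h => by positivity) (fun c _ => by positivity)
    (fun c a hca hra h v => by
      have hb {b : C} (hbc : r b < r c) : b ≠ a := fun e => (hbc.trans_le hra).ne (congrArg r e)
      refine if_congr (exists_congr fun b => and_congr_right fun _ =>
        and_congr_right fun hbc => ?_) rfl rfl
      rw [Function.update_of_ne hca, Function.update_of_ne (hb hbc)])
    (fun c hc h => by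
      refine (expect_ite_exp_le _ _ θ).trans ?_
      gcongr
      · exact card_filter_update_mem_image_le r B (W c) c h
      · exact hW c hc)
  simpa only [exp_mul_card_filter, ← exp_sum, ← mul_sum, ← sum_div] using hstep

-- The two orderings give dependent counts, so they are separated by Cauchy-Schwarz; each ordered
-- pair in `A × B` is charged to only one ordering, which is where the factor `1 / 2` comes from.
theorem expect_exp_mul_card_collisions_le (W : C → Finset V) (A B : Finset C) {T : ℕ}
    (hT : 0 < T) (hW : ∀ c ∈ A, T ≤ #(W c)) {θ : ℝ} (hθ : 0 ≤ θ) :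
    𝔼 h ∈ piFinset W, exp (θ * (#{c ∈ A | ∃ b ∈ B.erase c, h b = h c} / 2))
      ≤ exp ((exp θ - 1) * (#A * #B / T / 2)) := by
  let r := Fintype.equivFin C
  let X (h : C → V) : ℝ := #{c ∈ A | ∃ b ∈ B, r b < r c ∧ h b = h c}
  let Y (h : C → V) : ℝ :=
    #{c ∈ A | ∃ b ∈ B, OrderDual.toDual (r b) < OrderDual.toDual (r c) ∧ h b = h c}
  have hX := expect_exp_mul_card_early_collisions_le W r A B hT hW hθ
  have hY := expect_exp_mul_card_early_collisions_le W (OrderDual.toDual ∘ r) A B hT hW hθ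
  have hexp : 0 ≤ exp θ - 1 := sub_nonneg.2 (one_le_exp hθ)
  have exp_half_sq (x : ℝ) : exp (θ * (x / 2)) ^ 2 = exp (θ * x) := by
    rw [← exp_nat_mul]
    ring_nf
  have hsplit : 𝔼 h ∈ piFinset W, exp (θ * (#{c ∈ A | ∃ b ∈ B.erase c, h b = h c} / 2))
      ≤ 𝔼 h ∈ piFinset W, exp (θ * (X h / 2)) * exp (θ * (Y h / 2)) := by
    refine expect_le_expect fun h _ => ?_
    rw [← exp_add, ← mul_add, ← add_div]
    gcongr
    simp only [X, Y, ← Nat.cast_add, Nat.cast_le]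
    exact card_collisions_le_add_card_early_collisions r.injective A B h
  refine hsplit.trans (le_of_sq_le_sq ?_ (exp_pos _).le)
  calc (𝔼 h ∈ piFinset W, exp (θ * (X h / 2)) * exp (θ * (Y h / 2))) ^ 2
      ≤ (𝔼 h ∈ piFinset W, exp (θ * X h)) * 𝔼 h ∈ piFinset W, exp (θ * Y h) := by
        simpa only [exp_half_sq] using expect_mul_sq_le_sq_mul_sq (piFinset W)
          (fun h => exp (θ * (X h / 2))) (fun h => exp (θ * (Y h / 2)))
    _ ≤ _ := mul_le_mul hX hY (expect_nonneg fun _ _ => (exp_pos _).le) (exp_pos _).le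
    _ ≤ exp ((exp θ - 1) * (#A * #B / T)) := by
        rw [← exp_add, ← mul_add, ← add_div]
        gcongr
        exact sum_card_lt_add_sum_card_gt_le r A B
    _ = exp ((exp θ - 1) * (#A * #B / T / 2)) ^ 2 := by
        rw [← exp_nat_mul]
        ring_nf

theorem card_collisions_upper_tail_le (W : C → Finset V) (A B : Finset C) {T : ℕ} (hT : 0 < T)
    (hW : ∀ c ∈ A, T ≤ #(W c)) {d μ : ℝ} (hd : 0 ≤ d) (hμ : (#A * #B / T : ℝ) ≤ μ) :
    (#{h ∈ piFinset W | (1 + d) * μ ≤ #{c ∈ A | ∃ b ∈ B.erase c, h b = h c}} : ℝ)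
      ≤ #(piFinset W) * exp (-(μ / 2 * (d ^ 2 / (2 + d)))) := by
  have hμ0 : 0 ≤ μ := le_trans (by positivity) hμ
  have hmgf := expect_exp_mul_card_collisions_le W A B hT hW
    (log_nonneg (le_add_of_nonneg_right hd))
  have htail := card_upper_tail_le_of_expect_exp_le (piFinset W)
    (fun h => (#{c ∈ A | ∃ b ∈ B.erase c, h b = h c} : ℝ) / 2) hd (by positivity : 0 ≤ μ / 2) <| by
      refine hmgf.trans ?_
      rw [exp_log (by linarith), add_sub_cancel_left]
      gcongr
  simpa only [← mul_div_assoc, div_le_div_iff_of_pos_right (zero_lt_two' ℝ)] using htail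

lemma filter_eq_inter_filter_univ (s : Finset C) (P : C → Prop) [DecidablePred P] :
    {c ∈ s | P c} = s ∩ ({c | P c} : Finset C) := by
  rw [inter_filter, inter_univ]

lemma collisions_in_eq_collisions_hits (L : Finset V) (A B : Finset C) (h : C → V) :
    {c ∈ A | h c ∈ L ∧ ∃ b ∈ B.erase c, h b = h c} =
      {c ∈ A ∩ ({c | h c ∈ L} : Finset C) |
        ∃ b ∈ (B ∩ ({c | h c ∈ L} : Finset C)).erase c, h b = h c} := by
  ext c
  simp only [mem_filter, mem_inter, mem_erase, mem_univ, true_and]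
  grind

variable [Fintype V]

lemma mem_piFinset_ite_compl (L : Finset V) (S : Finset C) (h : C → V) :
    h ∈ piFinset (fun c => if c ∈ S then L else Lᶜ) ↔ ({c | h c ∈ L} : Finset C) = S := by
  rw [Fintype.mem_piFinset, Finset.ext_iff]
  refine forall_congr' fun c => ?_
  by_cases hc : c ∈ S <;> simp [hc]

-- Conditionally on the set `S` of elements hashing into `L`, the hash values remain independent and
-- those of the elements of `S` are uniform on `L`.
theorem card_collisions_in_and_hits_le {L : Finset V} (hL : L.Nonempty) (A B : Finset C)
    {d : ℝ} (hd : 0 ≤ d) (p q : ℝ) :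
    (#{h : C → V | (1 + d) * (p * q / #L) ≤ #{c ∈ A | h c ∈ L ∧ ∃ b ∈ B.erase c, h b = h c} ∧
        #{c ∈ A | h c ∈ L} ≤ p ∧ #{c ∈ B | h c ∈ L} ≤ q} : ℝ)
      ≤ Fintype.card (C → V) * exp (-(p * q / #L / 2 * (d ^ 2 / (2 + d)))) := by
  refine card_filter_le_of_forall_fiber univ (fun h => ({c | h c ∈ L} : Finset C)) _ fun S => ?_
  simp only [collisions_in_eq_collisions_hits]
  simp only [filter_eq_inter_filter_univ A, filter_eq_inter_filter_univ B]
  by_cases hpq : (#(A ∩ S) : ℝ) ≤ p ∧ (#(B ∩ S) : ℝ) ≤ q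
  · have fiber_eq : ({h | ({c | h c ∈ L} : Finset C) = S} : Finset (C → V)) =
        piFinset fun c => if c ∈ S then L else Lᶜ := by
      ext h
      simp only [mem_piFinset_ite_compl, mem_filter, mem_univ, true_and]
    have hμ : (#(A ∩ S) * #(B ∩ S) / #L : ℝ) ≤ p * q / #L := by
      have : 0 ≤ p := (Nat.cast_nonneg _).trans hpq.1
      gcongr
      exacts [hpq.1, hpq.2]
    rw [fiber_eq]
    refine le_trans (Nat.cast_le.2 (card_le_card fun h hh => ?_)) <|
      card_collisions_upper_tail_le _ (A ∩ S) (B ∩ S) hL.card_pos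
        (fun c hc => by rw [if_pos (mem_inter.1 hc).2]) hd hμ
    obtain ⟨-, rfl, hcoll, -⟩ := mem_filter.1 hh
    exact mem_filter.2 ⟨(mem_piFinset_ite_compl L _ h).2 rfl, hcoll⟩
  · rw [filter_false_of_mem, card_empty, Nat.cast_zero]
    · positivity
    · rintro h - ⟨rfl, -, hits⟩
      exact hpq hits

theorem card_collisions_in_upper_tail_le {L : Finset V} (hL : L.Nonempty) (A B : Finset C)
    {p q : ℝ} (hp : (#L * #A / Fintype.card V : ℝ) ≤ p)
    (hq : (#L * #B / Fintype.card V : ℝ) ≤ q) :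
    (#{h : C → V | 2 * (p * q / #L) ≤ #{c ∈ A | h c ∈ L ∧ ∃ b ∈ B.erase c, h b = h c}} : ℝ)
      ≤ Fintype.card (C → V) *
        (exp (-(p / 36)) + exp (-(q / 36)) + exp (-(p * q / #L / 38))) := by
  have hp0 : 0 ≤ p := le_trans (by positivity) hp
  have hq0 : 0 ≤ q := le_trans (by positivity) hq
  have hitsA := card_hits_upper_tail_le L A (show (0 : ℝ) ≤ 1 / 4 by norm_num) hp
  have hitsB := card_hits_upper_tail_le L B (show (0 : ℝ) ≤ 1 / 4 by norm_num) hq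
  -- The excess `7 / 25` solves `(1 + 7 / 25) * (5 / 4) ^ 2 = 2`.
  have coll := card_collisions_in_and_hits_le hL A B (show (0 : ℝ) ≤ 7 / 25 by norm_num)
    ((1 + 1 / 4) * p) ((1 + 1 / 4) * q)
  rw [show (1 + 7 / 25 : ℝ) * ((1 + 1 / 4) * p * ((1 + 1 / 4) * q) / #L) = 2 * (p * q / #L) by ring]
    at coll
  calc (#{h : C → V | 2 * (p * q / #L) ≤ #{c ∈ A | h c ∈ L ∧ ∃ b ∈ B.erase c, h b = h c}} : ℝ)
      ≤ #{h : C → V | (1 + 1 / 4) * p ≤ #{c ∈ A | h c ∈ L}} +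
          #{h : C → V | (1 + 1 / 4) * q ≤ #{c ∈ B | h c ∈ L}} +
          #{h : C → V | 2 * (p * q / #L) ≤ #{c ∈ A | h c ∈ L ∧ ∃ b ∈ B.erase c, h b = h c} ∧
            #{c ∈ A | h c ∈ L} ≤ (1 + 1 / 4) * p ∧ #{c ∈ B | h c ∈ L} ≤ (1 + 1 / 4) * q} := by
        norm_cast
        refine (card_le_card fun h hh => ?_).trans <|
          (card_union_le _ _).trans (Nat.add_le_add_right (card_union_le _ _) _)
        simp only [mem_union, mem_filter, mem_univ, true_and] at hh ⊢
        by_contra! hcon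
        exact (hcon.2 hh hcon.1.1.le).not_ge hcon.1.2.le
    _ ≤ _ := add_le_add_three hitsA hitsB coll
    _ ≤ Fintype.card (C → V) *
        (exp (-(p / 36)) + exp (-(q / 36)) + exp (-(p * q / #L / 38))) := by
        have hpq : 0 ≤ p * q / #L := by positivity
        rw [← mul_add, ← mul_add]
        gcongr
        · linarith
        · linarith
        · rw [show (1 + 1 / 4) * p * ((1 + 1 / 4) * q) / #L = 25 / 16 * (p * q / #L) by ring]
          linarith

end Collisions

section Good

variable {C : Type*} [DecidableEq C] {N T : ℕ}

/-- The hash values `1, …, T`, encoded as in `lowF`, as the elements of `Fin N` below `T`. -/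
def lowValues (N T : ℕ) : Finset (Fin N) := {v | (v : ℕ) < T}

lemma card_lowValues (hTN : T ≤ N) : #(lowValues N T) = T := by
  rw [lowValues, Fin.card_filter_val_lt, min_eq_right hTN]

lemma lowF_eq_hits (A : Finset C) (h : C → Fin N) :
    lowF T A h = {c ∈ A | h c ∈ lowValues N T} := by
  simp only [lowF, lowValues, mem_filter, mem_univ, true_and]

lemma collF_eq_collisions_in (A B : Finset C) (h : C → Fin N) :
    collF T A B h = {c ∈ A | h c ∈ lowValues N T ∧ ∃ b ∈ B.erase c, h b = h c} := by
  simp only [collF, lowValues, mem_filter, mem_univ, true_and]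

/-- The scale against which `IsGood` measures the low part of `A` and its collisions: `T|A|/N` when
`|A| ≥ aN` and `Ta` otherwise. -/
noncomputable def goodScale (a : ℝ) (N T : ℕ) (A : Finset C) : ℝ := max (T * #A / N) (T * a)

lemma isGood_of_card_le {a b : ℝ} {A B : Finset C} {h : C → Fin N} (hN : 0 < N)
    (hlow : (#(lowF T A h) : ℝ) ≤ (1 + b) * goodScale a N T A)
    (hlow_ge : a * N ≤ #A → (1 - b) * (T * #A / N : ℝ) ≤ #(lowF T A h))
    (hcoll : (#(collF T A B h) : ℝ) ≤ 2 * (b * goodScale a N T A)) : IsGood a b T A B h := by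
  have hN' : (0 : ℝ) < N := Nat.cast_pos.2 hN
  have assoc (x : ℝ) : x * T * #A / N = x * (T * #A / N) := by ring
  refine ⟨fun hA => ?_, fun hA => ?_⟩
  · have hscale : goodScale a N T A = T * #A / N := by
      refine max_eq_left ?_
      rw [mul_div_assoc]
      gcongr
      exact (le_div_iff₀ hN').2 hA
    rw [hscale] at hlow hcoll
    rw [assoc, assoc, assoc, mul_assoc 2]
    exact ⟨⟨hlow_ge hA, hlow⟩, hcoll⟩
  · have hscale : goodScale a N T A = T * a := by
      refine max_eq_right ?_
      rw [mul_div_assoc]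
      gcongr
      exact (div_le_iff₀ hN').2 hA.le
    rw [hscale] at hlow hcoll
    exact ⟨by linarith, by linarith⟩

variable [Fintype C]

lemma card_lowF_upper_tail_le {a b ν : ℝ} (ha : 0 < a) (hb0 : 0 < b) (hb1 : b < 1) (hν : 0 < ν)
    (hTN : T ≤ N) (hlog : log (8 / ν) ≤ T * a * (b ^ 2 / 3)) (A : Finset C) :
    (#{h : C → Fin N | (1 + b) * goodScale a N T A ≤ #(lowF T A h)} : ℝ)
      ≤ Fintype.card (C → Fin N) * (ν / 8) := by
  have hμ : (#(lowValues N T) * #A / Fintype.card (Fin N) : ℝ) ≤ goodScale a N T A := by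
    rw [card_lowValues hTN, Fintype.card_fin]
    exact le_max_left _ _
  simp only [lowF_eq_hits]
  refine (card_hits_upper_tail_le _ A hb0.le hμ).trans ?_
  gcongr
  refine exp_neg_le_div_of_log_div_le (by norm_num) hν (hlog.trans ?_)
  have hM : T * a ≤ goodScale a N T A := le_max_right _ _
  have hM0 : 0 ≤ goodScale a N T A := le_trans (by positivity) hM
  gcongr
  linarith

lemma card_lowF_lower_tail_le {a b ν : ℝ} (hb : 0 < b) (hν : 0 < ν) (hN : 0 < N) (hTN : T ≤ N)
    (hlog : log (8 / ν) ≤ T * a * (b ^ 2 / 3)) {A : Finset C} (hA : a * N ≤ #A) :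
    (#{h : C → Fin N | (#(lowF T A h) : ℝ) ≤ (1 - b) * (T * #A / N)} : ℝ)
      ≤ Fintype.card (C → Fin N) * (ν / 8) := by
  have htail := card_hits_lower_tail_le (lowValues N T) A hb.le
  simp only [← lowF_eq_hits, card_lowValues hTN, Fintype.card_fin N] at htail
  refine htail.trans ?_
  gcongr
  refine exp_neg_le_div_of_log_div_le (by norm_num) hν (hlog.trans ?_)
  rw [mul_div_assoc]
  gcongr
  · exact (le_div_iff₀ (Nat.cast_pos.2 hN)).2 hA
  · norm_num

lemma card_collF_upper_tail_le {a b ν : ℝ} (ha0 : 0 < a) (ha1 : a < 1) (hb0 : 0 < b) (hb1 : b < 1)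
    (hν : 0 < ν) (hT : 0 < T) (hTN : T ≤ N) (hlog : log (12 / ν) ≤ T * a * b / 45)
    (A : Finset C) {B : Finset C} (hB : (#B : ℝ) ≤ b * N) :
    (#{h : C → Fin N | 2 * (b * goodScale a N T A) ≤ #(collF T A B h)} : ℝ)
      ≤ Fintype.card (C → Fin N) * (ν / 4) := by
  have hT' : (0 : ℝ) < T := Nat.cast_pos.2 hT
  have hM : T * a ≤ goodScale a N T A := le_max_right _ _
  have hL : (lowValues N T).Nonempty := card_pos.1 (by rwa [card_lowValues hTN])
  have htail := card_collisions_in_upper_tail_le hL A B (p := goodScale a N T A) (q := b * T)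
    (by rw [card_lowValues hTN, Fintype.card_fin]; exact le_max_left _ _)
    (by
      rw [card_lowValues hTN, Fintype.card_fin, mul_div_assoc, mul_comm b]
      gcongr
      exact (div_le_iff₀ (Nat.cast_pos.2 (hT.trans_le hTN))).2 hB)
  have hscale : goodScale a N T A * (b * T) / T = b * goodScale a N T A := by field_simp
  simp only [← collF_eq_collisions_in, card_lowValues hTN, hscale] at htail
  refine htail.trans ?_
  rw [show ν / 4 = ν / 12 + ν / 12 + ν / 12 by ring]
  have hTab : 0 < T * a * b := by positivity
  have hTab_le_Ta : T * a * b ≤ T * a := mul_le_of_le_one_right (by positivity) hb1.le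
  have hTab_le_bT : T * a * b ≤ b * T := by nlinarith [mul_pos hb0 hT']
  have hTab_le_bM : T * a * b ≤ b * goodScale a N T A := by
    rw [mul_comm b]
    gcongr
  gcongr <;> refine exp_neg_le_div_of_log_div_le (by norm_num) hν (hlog.trans ?_) <;> linarith

lemma card_not_isGood_le {a b ν : ℝ} (ha0 : 0 < a) (ha1 : a < 1) (hb0 : 0 < b) (hb1 : b < 1)
    (hν : 0 < ν) (hT : 0 < T) (hTN : T ≤ N) (hlog8 : log (8 / ν) ≤ T * a * (b ^ 2 / 3))
    (hlog12 : log (12 / ν) ≤ T * a * b / 45) (A : Finset C) {B : Finset C}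
    (hB : (#B : ℝ) ≤ b * N) :
    (#{h : C → Fin N | ¬IsGood a b T A B h} : ℝ) ≤ Fintype.card (C → Fin N) * (ν / 2) := by
  have hN : 0 < N := hT.trans_le hTN
  let lowBig : Finset (C → Fin N) := {h | (1 + b) * goodScale a N T A ≤ #(lowF T A h)}
  let lowSmall : Finset (C → Fin N) :=
    {h | a * N ≤ #A ∧ (#(lowF T A h) : ℝ) ≤ (1 - b) * (T * #A / N)}
  let collBig : Finset (C → Fin N) := {h | 2 * (b * goodScale a N T A) ≤ #(collF T A B h)}
  have hlowBig : (#lowBig : ℝ) ≤ Fintype.card (C → Fin N) * (ν / 8) :=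
    card_lowF_upper_tail_le ha0 hb0 hb1 hν hTN hlog8 A
  have hlowSmall : (#lowSmall : ℝ) ≤ Fintype.card (C → Fin N) * (ν / 8) := by
    by_cases hA : a * N ≤ #A
    · simpa only [lowSmall, hA, true_and] using card_lowF_lower_tail_le hb0 hν hN hTN hlog8 hA
    · simp only [lowSmall, hA, false_and, filter_false, card_empty, Nat.cast_zero]
      positivity
  have hcollBig : (#collBig : ℝ) ≤ Fintype.card (C → Fin N) * (ν / 4) :=
    card_collF_upper_tail_le ha0 ha1 hb0 hb1 hν hT hTN hlog12 A hB
  have hcover : ({h | ¬IsGood a b T A B h} : Finset (C → Fin N)) ⊆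
      lowBig ∪ lowSmall ∪ collBig := by
    intro h hbad
    contrapose! hbad
    simp only [lowBig, lowSmall, collBig, mem_union, mem_filter, mem_univ, true_and, not_or,
      not_and, not_le] at hbad
    obtain ⟨⟨hlow, hlow_ge⟩, hcoll⟩ := hbad
    simpa only [mem_filter, mem_univ, true_and, not_not] using
      isGood_of_card_le hN hlow.le (fun hA => (hlow_ge hA).le) hcoll.le
  calc (#{h : C → Fin N | ¬IsGood a b T A B h} : ℝ) ≤ #lowBig + #lowSmall + #collBig := by
        exact_mod_cast (card_le_card hcover).trans <|
          (card_union_le _ _).trans (Nat.add_le_add_right (card_union_le _ _) _)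
    _ ≤ Fintype.card (C → Fin N) * (ν / 2) := by linarith

end Good

theorem stmt5_general {C : Type*} [Fintype C] [DecidableEq C] {a b ν : ℝ} (ha0 : 0 < a)
    (ha1 : a < 1) (hb0 : 0 < b) (hb1 : b < 1) (hν : 0 < ν) {N T : ℕ} (hT : 0 < T) (hTN : T ≤ N)
    (hTlb : max (3 * b⁻¹ ^ 2 * a⁻¹ * log (8 / ν)) (45 * a⁻¹ * b⁻¹ * log (12 / ν)) ≤ T)
    (A : Finset C) {B : Finset C} (hB : (#B : ℝ) ≤ b * N) :
    1 - ν / 2 ≤ (#{h : C → Fin N | IsGood a b T A B h} : ℝ) / (N : ℝ) ^ Fintype.card C := by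
  have hN : 0 < N := hT.trans_le hTN
  have : Nonempty (Fin N) := ⟨⟨0, hN⟩⟩
  have hlog8 : log (8 / ν) ≤ T * a * (b ^ 2 / 3) := calc
    log (8 / ν) = 3 * b⁻¹ ^ 2 * a⁻¹ * log (8 / ν) * (a * (b ^ 2 / 3)) := by field_simp
    _ ≤ T * (a * (b ^ 2 / 3)) := by gcongr; exact (le_max_left _ _).trans hTlb
    _ = T * a * (b ^ 2 / 3) := (mul_assoc _ _ _).symm
  have hlog12 : log (12 / ν) ≤ T * a * b / 45 := calc
    log (12 / ν) = 45 * a⁻¹ * b⁻¹ * log (12 / ν) * (a * b / 45) := by field_simp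
    _ ≤ T * (a * b / 45) := by gcongr; exact (le_max_right _ _).trans hTlb
    _ = T * a * b / 45 := by ring
  have hbad := card_not_isGood_le ha0 ha1 hb0 hb1 hν hT hTN hlog8 hlog12 A hB
  simpa only [Fintype.card_fun, Fintype.card_fin, Nat.cast_pow] using
    one_sub_le_card_filter_div_card _ hbad

end

theorem stmt5 {C : Type*} [Fintype C] [DecidableEq C]
    (a b ν : ℝ) (ha0 : 0 < a) (ha1 : a < 1) (hb0 : 0 < b) (hb1 : b < 1)
    (hν0 : 0 < ν) (hν1 : ν < 1) (hab : a ≤ b)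
    (N T : ℕ) (hN : 0 < N) (hT : 0 < T) (hTN : T ≤ N)
    (hTlb : max (3 * b⁻¹ ^ 2 * a⁻¹ * Real.log (8 / ν))
        (45 * a⁻¹ * b⁻¹ * Real.log (12 / ν)) ≤ (T : ℝ))
    (A B : Finset C) (hA : (A.card : ℝ) ≤ b * N) (hB : (B.card : ℝ) ≤ b * N) :
    1 - ν / 2 ≤
      ((Finset.univ.filter fun h : C → Fin N => IsGood a b T A B h).card : ℝ)
        / ((N : ℝ) ^ Fintype.card C) := by
  exact stmt5_general ha0 ha1 hb0 hb1 hν0 hT hTN hTlb A hB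
end

section
/- Let C be a finite set, N a positive integer, h : C → {1,…,N} a function, and T ≤ N a threshold. For subsets S_u, S_v ⊆ C, write I = S_u ∩ S_v, U = S_u ∪ S_v, T_u = Hit^{≤T}(S_u,h,S_u), and T_v = Hit^{≤T}(S_v,h,S_v). Then |h(T_u) ∩ h(T_v)| ≤ |I|_h^{≤T}| + |h(Coll^{≤T}(U,h,U))|. -/
/-- `A|_h^{≤T}`: elements of `A` hashing (through `h : C → {1,…,N}`) to a value in `{1,…,T}`. -/
def lowSet {α : Type*} [DecidableEq α] (h : α → ℕ) (T : ℕ) (A : Finset α) : Finset α :=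
  A.filter fun c => 1 ≤ h c ∧ h c ≤ T

/-- `Coll^{≤T}(A,h,B)`: elements of `A` hashing to a value in `{1,…,T}` that collide with
a distinct element of `B`. -/
def collSet {α : Type*} [DecidableEq α] (h : α → ℕ) (T : ℕ) (A B : Finset α) : Finset α :=
  A.filter fun c => (1 ≤ h c ∧ h c ≤ T) ∧ ∃ b ∈ B.erase c, h b = h c

/-- `Hit^{≤T}(A,h,B) = A|_h^{≤T} \ Coll^{≤T}(A,h,B)`. -/
def hitSet {α : Type*} [DecidableEq α] (h : α → ℕ) (T : ℕ) (A B : Finset α) : Finset α :=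
  lowSet h T A \ collSet h T A B

section

variable {α : Type*} [DecidableEq α] {h : α → ℕ} {T : ℕ} {A B A' B' : Finset α} {c : α}

lemma mem_lowSet : c ∈ lowSet h T A ↔ c ∈ A ∧ 1 ≤ h c ∧ h c ≤ T :=
  Finset.mem_filter

lemma mem_collSet :
    c ∈ collSet h T A B ↔ c ∈ A ∧ (1 ≤ h c ∧ h c ≤ T) ∧ ∃ b ∈ B, b ≠ c ∧ h b = h c := by
  simp only [collSet, Finset.mem_filter, Finset.mem_erase, and_assoc, and_left_comm]

lemma hitSet_subset_lowSet : hitSet h T A B ⊆ lowSet h T A :=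
  Finset.sdiff_subset

lemma collSet_subset_collSet (hA : A ⊆ A') (hB : B ⊆ B') :
    collSet h T A B ⊆ collSet h T A' B' := by
  intro c hc
  obtain ⟨hcA, hcT, b, hbB, hbc⟩ := mem_collSet.mp hc
  exact mem_collSet.mpr ⟨hA hcA, hcT, b, hB hbB, hbc⟩

-- If `a ∈ A` and `b ∈ B` share a value, then either `a = b` lies in `A ∩ B`, or `a` collides
-- with `b`.
lemma image_lowSet_inter_image_lowSet :
    (lowSet h T A).image h ∩ (lowSet h T B).image h
      = (lowSet h T (A ∩ B)).image h ∪ (collSet h T A B).image h := by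
  ext y
  simp only [Finset.mem_inter, Finset.mem_union, Finset.mem_image, mem_lowSet, mem_collSet]
  constructor
  · rintro ⟨⟨a, ⟨haA, haT⟩, rfl⟩, b, ⟨hbB, -⟩, hba⟩
    obtain rfl | hne := eq_or_ne b a
    · exact .inl ⟨b, ⟨⟨haA, hbB⟩, haT⟩, rfl⟩
    · exact .inr ⟨a, ⟨haA, haT, b, hbB, hne, hba⟩, rfl⟩
  · rintro (⟨c, ⟨⟨hcA, hcB⟩, hcT⟩, rfl⟩ | ⟨a, ⟨haA, haT, b, hbB, -, hba⟩, rfl⟩)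
    · exact ⟨⟨c, ⟨hcA, hcT⟩, rfl⟩, c, ⟨hcB, hcT⟩, rfl⟩
    · exact ⟨⟨a, ⟨haA, haT⟩, rfl⟩, b, ⟨hbB, hba ▸ haT⟩, hba⟩

end

theorem stmt9_general {α : Type*} [DecidableEq α] (h : α → ℕ) (T : ℕ) (Su Sv : Finset α) :
    ((lowSet h T Su).image h ∩ (lowSet h T Sv).image h).card
      ≤ (lowSet h T (Su ∩ Sv)).card + ((collSet h T Su Sv).image h).card := by
  rw [image_lowSet_inter_image_lowSet]
  exact (Finset.card_union_le _ _).trans (Nat.add_le_add_right Finset.card_image_le _)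

theorem stmt9 {α : Type*} [Fintype α] [DecidableEq α] (N T : ℕ) (hN : 0 < N) (hTN : T ≤ N)
    (h : α → ℕ) (hrange : ∀ x, 1 ≤ h x ∧ h x ≤ N) (Su Sv : Finset α) :
    ((hitSet h T Su Su).image h ∩ (hitSet h T Sv Sv).image h).card
      ≤ (lowSet h T (Su ∩ Sv)).card
        + ((collSet h T (Su ∪ Sv) (Su ∪ Sv)).image h).card := by
  grw [hitSet_subset_lowSet, hitSet_subset_lowSet, stmt9_general,
    collSet_subset_collSet Finset.subset_union_left Finset.subset_union_right]
end

section
/- Let C be a finite set, let pal ⊆ C be nonempty, and let Y ⊆ C satisfy |Y| ≤ |pal|/2. Set P = pal ∪ Y, T_v = pal \ Y, N = 6·|pal|, and let T ≤ N be a positive threshold and h : C → {1,…,N} a function. If |Hit^{≤T}(pal,h,pal)| ≤ (4/3)·T·|pal|/N and |Hit^{≤T}(T_v,h,P)| ≥ (1/3)·T·|T_v|/N, then Hit^{≤T}(T_v,h,P) ⊆ Hit^{≤T}(pal,h,pal) and |Hit^{≤T}(T_v,h,P)| ≥ (1/8)·|Hit^{≤T}(pal,h,pal)|. -/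
section

variable {α : Type*} [DecidableEq α] {h : α → ℕ} {T : ℕ}

theorem mem_hitSet {A B : Finset α} {c : α} :
    c ∈ hitSet h T A B ↔ c ∈ A ∧ (1 ≤ h c ∧ h c ≤ T) ∧ ∀ b ∈ B, h b = h c → b = c := by
  simp only [hitSet, lowSet, collSet, Finset.mem_sdiff, Finset.mem_filter, Finset.mem_erase]
  grind

theorem hitSet_subset_hitSet {A A' B B' : Finset α} (hA : A ⊆ A') (hB : B' ⊆ B) :
    hitSet h T A B ⊆ hitSet h T A' B' := by
  intro c hc
  obtain ⟨hcA, hlow, hinj⟩ := mem_hitSet.1 hc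
  exact mem_hitSet.2 ⟨hA hcA, hlow, fun b hb => hinj b (hB hb)⟩

theorem one_sub_mul_card_le_card_sdiff {s t : Finset α} {θ : ℝ}
    (ht : (t.card : ℝ) ≤ θ * s.card) : (1 - θ) * s.card ≤ ((s \ t).card : ℝ) := by
  have hcard : (s.card : ℝ) ≤ (s \ t).card + t.card :=
    mod_cast Finset.card_le_card_sdiff_add_card
  linarith

/-- Here `ρ` plays the role of `T / N`, so that `ρ * A.card` is the expected number of elements of
`A` hashing to at most `T` under a uniformly random `h`. -/
theorem stmt15_general {pal Y : Finset α} {a b θ ρ : ℝ} (ha : 0 ≤ a) (hb : 0 ≤ b) (hθ : θ ≤ 1)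
    (hρ : 0 ≤ ρ) (hY : (Y.card : ℝ) ≤ θ * pal.card)
    (hupper : ((hitSet h T pal pal).card : ℝ) ≤ b * ρ * pal.card)
    (hlower : a * ρ * (pal \ Y).card ≤ ((hitSet h T (pal \ Y) (pal ∪ Y)).card : ℝ)) :
    hitSet h T (pal \ Y) (pal ∪ Y) ⊆ hitSet h T pal pal ∧
      a * (1 - θ) * (hitSet h T pal pal).card
        ≤ b * ((hitSet h T (pal \ Y) (pal ∪ Y)).card : ℝ) := by
  refine ⟨hitSet_subset_hitSet Finset.sdiff_subset Finset.subset_union_left, ?_⟩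
  have : 0 ≤ 1 - θ := sub_nonneg.2 hθ
  calc a * (1 - θ) * (hitSet h T pal pal).card
      ≤ a * (1 - θ) * (b * ρ * pal.card) := by gcongr
    _ = b * (a * ρ * ((1 - θ) * pal.card)) := by ring
    _ ≤ b * (a * ρ * (pal \ Y).card) := by
      gcongr
      exact one_sub_mul_card_le_card_sdiff hY
    _ ≤ b * ((hitSet h T (pal \ Y) (pal ∪ Y)).card : ℝ) := by gcongr

end

/-- Deterministic core of the MultiTrial analysis. -/
theorem stmt15 {α : Type*} [Fintype α] [DecidableEq α] (pal Y : Finset α)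
    (hpal : pal.Nonempty) (hY : (Y.card : ℝ) ≤ (pal.card : ℝ) / 2)
    (N T : ℕ) (hN : N = 6 * pal.card) (hT : 0 < T) (hTN : T ≤ N)
    (h : α → ℕ) (hrange : ∀ x, 1 ≤ h x ∧ h x ≤ N)
    (h1 : ((hitSet h T pal pal).card : ℝ) ≤ (4 / 3) * T * (pal.card : ℝ) / N)
    (h2 : (1 / 3 : ℝ) * T * ((pal \ Y).card : ℝ) / N
        ≤ ((hitSet h T (pal \ Y) (pal ∪ Y)).card : ℝ)) :
    hitSet h T (pal \ Y) (pal ∪ Y) ⊆ hitSet h T pal pal ∧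
      (1 / 8 : ℝ) * ((hitSet h T pal pal).card : ℝ)
        ≤ ((hitSet h T (pal \ Y) (pal ∪ Y)).card : ℝ) := by
  have hgen := stmt15_general (a := 1 / 3) (b := 4 / 3) (θ := 1 / 2) (ρ := T / N) (by norm_num)
    (by norm_num) (by norm_num) (by positivity) (by linarith) (h1.trans_eq (by ring))
    (le_of_eq_of_le (by ring) h2)
  exact ⟨hgen.1, by linarith [hgen.2]⟩
end
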